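/- If β > 1/3, then there exists a constant C = C(β) > 0 such that for all real numbers a, b, c, Σ_{n ∈ ℤ} ⟨n³ + an² + bn + c⟩^{−β} ≤ C; in particular the bound is uniform in a, b, and c. -/

import Mathlib

/-- The Japanese bracket `⟨x⟩ = (1 + x²)^{1/2}`. -/
noncomputable def jb (x : ℝ) : ℝ := Real.sqrt (1 + x^2)

/-!
Over `ℂ`, a monic polynomial `p` of degree `d` is a product of `d` linear factors, so the root `ζ`
closest to `n` satisfies `|n - ζ| ^ d ≤ |p(n)|`. Hence `⟨p(n)⟩^{-β}` is bounded, up to a constant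
factor, by the sum over the roots of `⟨n - Re ζ⟩^{-dβ}`. Moving `Re ζ` to an integer changes the
bracket by at most a factor `2`, and the sum over `ℤ` is invariant under integer translations;
since `dβ > 1`, each root therefore contributes at most a constant depending only on `dβ`.
-/

open Polynomial

section JapaneseBracket

variable {x y : ℝ}

lemma one_le_jb (x : ℝ) : 1 ≤ jb x :=
  Real.one_le_sqrt.mpr (le_add_of_nonneg_right (sq_nonneg x))

lemma jb_pos (x : ℝ) : 0 < jb x :=
  one_pos.trans_le (one_le_jb x)

lemma abs_le_jb (x : ℝ) : |x| ≤ jb x :=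
  Real.abs_le_sqrt (le_add_of_nonneg_left zero_le_one)

lemma jb_abs (x : ℝ) : jb |x| = jb x := by
  rw [jb, jb, sq_abs]

lemma jb_le_one_add_abs (x : ℝ) : jb x ≤ 1 + |x| := by
  simpa only [jb, Real.norm_eq_abs, sq_abs] using sqrt_one_add_norm_sq_le x

lemma jb_le_two_mul_jb (h : |x - y| ≤ 1) : jb x ≤ 2 * jb y := by
  refine (Real.sqrt_le_left (by linarith [jb_pos y])).mpr ?_
  have hxy : (x - y) ^ 2 ≤ 1 := (sq_le_one_iff_abs_le_one _).mpr h
  rw [mul_pow, jb, Real.sq_sqrt (by positivity)]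
  linarith [sq_nonneg (x - 2 * y), sq_nonneg y]

lemma jb_pow_le_two_pow_mul_jb {d : ℕ} (h : |x| ^ d ≤ |y|) : jb x ^ d ≤ 2 ^ d * jb y := by
  have hmax : max 1 |x| ^ d ≤ jb y := by
    rcases max_choice 1 |x| with hx | hx
    · simpa only [hx, one_pow] using one_le_jb y
    · simpa only [hx] using h.trans (abs_le_jb y)
  calc jb x ^ d ≤ (2 * max 1 |x|) ^ d := by
        gcongr
        · exact (jb_pos x).le
        · linarith [jb_le_one_add_abs x, le_max_left 1 |x|, le_max_right 1 |x|]
    _ = 2 ^ d * max 1 |x| ^ d := mul_pow _ _ _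
    _ ≤ 2 ^ d * jb y := by gcongr

end JapaneseBracket

lemma rpow_neg_le_mul_rpow_neg {u v K s : ℝ} (hu : 0 < u) (hK : 0 < K) (hs : 0 ≤ s)
    (h : u ≤ K * v) : v ^ (-s) ≤ K ^ s * u ^ (-s) := by
  have hv : u / K ≤ v := (div_le_iff₀' hK).mpr h
  calc v ^ (-s) ≤ (u / K) ^ (-s) :=
        Real.rpow_le_rpow_of_nonpos (by positivity) hv (neg_nonpos.mpr hs)
    _ = K ^ s * u ^ (-s) := by
        rw [Real.div_rpow hu.le hK.le, Real.rpow_neg hK.le, div_inv_eq_mul, mul_comm]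

lemma jb_rpow_neg_le_of_pow_le {x y β : ℝ} {d : ℕ} (hβ : 0 ≤ β) (h : |x| ^ d ≤ |y|) :
    jb y ^ (-β) ≤ (2 ^ d) ^ β * jb x ^ (-(d * β)) := by
  rw [← mul_neg, Real.rpow_natCast_mul (jb_pos x).le]
  exact rpow_neg_le_mul_rpow_neg (pow_pos (jb_pos x) d) (by positivity) hβ
    (jb_pow_le_two_pow_mul_jb h)

lemma summable_jb_intCast_rpow_neg {s : ℝ} (hs : 1 < s) :
    Summable fun n : ℤ => jb n ^ (-s) := by
  refine (Real.summable_abs_int_rpow hs).of_norm_bounded_eventually ?_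
  filter_upwards [(Set.finite_singleton (0 : ℤ)).compl_mem_cofinite] with n hn
  rw [Real.norm_of_nonneg (Real.rpow_nonneg (jb_pos _).le _)]
  exact Real.rpow_le_rpow_of_nonpos (abs_pos.mpr (Int.cast_ne_zero.mpr hn)) (abs_le_jb _)
    (by linarith)

lemma exists_tsum_jb_intCast_sub_rpow_neg_le {s : ℝ} (hs : 1 < s) :
    ∃ B > 0, ∀ x : ℝ, Summable (fun n : ℤ => jb (n - x) ^ (-s)) ∧
      ∑' n : ℤ, jb (n - x) ^ (-s) ≤ B := by
  have hsum := summable_jb_intCast_rpow_neg hs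
  have hpos : 0 < ∑' n : ℤ, jb n ^ (-s) :=
    hsum.tsum_pos (fun n => (Real.rpow_pos_of_pos (jb_pos _) _).le) 0
      (Real.rpow_pos_of_pos (jb_pos _) _)
  refine ⟨2 ^ s * ∑' n : ℤ, jb n ^ (-s), by positivity, fun x => ?_⟩
  have hshift : HasSum (fun n : ℤ => 2 ^ s * jb (n - ⌊x⌋ : ℤ) ^ (-s))
      (2 ^ s * ∑' n : ℤ, jb n ^ (-s)) :=
    ((Equiv.subRight ⌊x⌋).hasSum_iff.mpr hsum.hasSum).mul_left _
  have hle (n : ℤ) : jb (n - x) ^ (-s) ≤ 2 ^ s * jb (n - ⌊x⌋ : ℤ) ^ (-s) := by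
    refine rpow_neg_le_mul_rpow_neg (jb_pos _) two_pos (by linarith) (jb_le_two_mul_jb ?_)
    rw [Int.cast_sub, sub_sub_sub_cancel_left, Int.self_sub_floor,
      abs_of_nonneg (Int.fract_nonneg x)]
    exact (Int.fract_lt_one x).le
  have hx : Summable fun n : ℤ => jb (n - x) ^ (-s) :=
    hshift.summable.of_nonneg_of_le (fun n => (Real.rpow_pos_of_pos (jb_pos _) _).le) hle
  exact ⟨hx, hasSum_le hle hx.hasSum hshift⟩

lemma exists_mem_roots_norm_sub_pow_natDegree_le {K : Type*} [NormedField K] {p : K[X]}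
    (hp : p.Monic) (hsplits : p.Splits) (hdeg : p.natDegree ≠ 0) (z : K) :
    ∃ ζ ∈ p.roots, ‖z - ζ‖ ^ p.natDegree ≤ ‖p.eval z‖ := by
  classical
  have hcard : p.roots.card = p.natDegree := hsplits.natDegree_eq_card_roots.symm
  have hne : p.roots.toFinset.Nonempty := by
    rw [Multiset.toFinset_nonempty, ← Multiset.card_pos, hcard]
    exact Nat.pos_of_ne_zero hdeg
  obtain ⟨ζ, hζ, hmin⟩ := p.roots.toFinset.exists_min_image (fun ξ => ‖z - ξ‖) hne
  refine ⟨ζ, Multiset.mem_toFinset.mp hζ, ?_⟩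
  calc ‖z - ζ‖ ^ p.natDegree = (p.roots.map fun _ => ‖z - ζ‖).prod := by
        rw [Multiset.map_const', Multiset.prod_replicate, hcard]
    _ ≤ (p.roots.map fun ξ => ‖z - ξ‖).prod :=
        Multiset.prod_map_le_prod_map₀ _ _ (fun _ _ => norm_nonneg _)
          fun ξ hξ => hmin ξ (Multiset.mem_toFinset.mpr hξ)
    _ = ‖p.eval z‖ := by
        rw [hsplits.eval_eq_prod_roots_of_monic hp, ← normHom_apply, map_multiset_prod,
          Multiset.map_map]
        rfl

lemma jb_norm_eval_rpow_neg_le_sum_roots {p : ℂ[X]} {β : ℝ} (hp : p.Monic)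
    (hdeg : p.natDegree ≠ 0) (hβ : 0 ≤ β) (x : ℝ) :
    jb ‖p.eval (x : ℂ)‖ ^ (-β) ≤
      ∑ ζ ∈ p.roots.toFinset, (2 ^ p.natDegree) ^ β * jb (x - ζ.re) ^ (-(p.natDegree * β)) := by
  obtain ⟨ζ, hζ, hle⟩ :=
    exists_mem_roots_norm_sub_pow_natDegree_le hp (IsAlgClosed.splits p) hdeg (x : ℂ)
  have hre : |x - ζ.re| ≤ ‖(x : ℂ) - ζ‖ := by
    simpa only [Complex.sub_re, Complex.ofReal_re] using Complex.abs_re_le_norm ((x : ℂ) - ζ)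
  have hpow : |x - ζ.re| ^ p.natDegree ≤ |‖p.eval (x : ℂ)‖| := by
    rw [abs_norm]
    exact (pow_le_pow_left₀ (abs_nonneg _) hre _).trans hle
  refine (jb_rpow_neg_le_of_pow_le hβ hpow).trans
    (Finset.single_le_sum (f := fun ξ : ℂ => (2 ^ p.natDegree) ^ β *
      jb (x - ξ.re) ^ (-(p.natDegree * β))) (fun ξ _ => ?_) (Multiset.mem_toFinset.mpr hζ))
  exact mul_nonneg (by positivity) (Real.rpow_nonneg (jb_pos _).le _)

theorem sum_bracket_cubic_general {d : ℕ} {β : ℝ} (hβ : 1 < d * β) :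
    ∃ C > 0, ∀ p : ℂ[X], p.Monic → p.natDegree = d →
      Summable (fun n : ℤ => jb ‖p.eval (n : ℂ)‖ ^ (-β)) ∧
      ∑' n : ℤ, jb ‖p.eval (n : ℂ)‖ ^ (-β) ≤ C := by
  have hd : 0 < d := Nat.pos_of_ne_zero (by rintro rfl; norm_num at hβ)
  have hβ_pos : 0 < β := pos_of_mul_pos_right (one_pos.trans hβ) d.cast_nonneg
  obtain ⟨B, hB, htranslate⟩ := exists_tsum_jb_intCast_sub_rpow_neg_le hβ
  refine ⟨d * ((2 ^ d) ^ β * B), by positivity, fun p hp hdeg => ?_⟩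
  subst hdeg
  have hmajorant := hasSum_sum (s := p.roots.toFinset) fun ζ _ =>
    (htranslate ζ.re).1.hasSum.mul_left ((2 ^ p.natDegree) ^ β)
  have hle (n : ℤ) := jb_norm_eval_rpow_neg_le_sum_roots hp hd.ne' hβ_pos.le n
  simp only [Complex.ofReal_intCast] at hle
  have hsum : Summable fun n : ℤ => jb ‖p.eval (n : ℂ)‖ ^ (-β) :=
    hmajorant.summable.of_nonneg_of_le (fun n => Real.rpow_nonneg (jb_pos _).le _) hle
  have hcard : p.roots.toFinset.card ≤ p.natDegree :=
    (Multiset.toFinset_card_le _).trans p.card_roots'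
  refine ⟨hsum, ?_⟩
  calc ∑' n : ℤ, jb ‖p.eval (n : ℂ)‖ ^ (-β)
      ≤ ∑ ζ ∈ p.roots.toFinset,
          (2 ^ p.natDegree) ^ β * ∑' n : ℤ, jb (n - ζ.re) ^ (-(p.natDegree * β)) :=
        hasSum_le hle hsum.hasSum hmajorant
    _ ≤ ∑ _ζ ∈ p.roots.toFinset, (2 ^ p.natDegree) ^ β * B := by
        gcongr with ζ
        exact (htranslate ζ.re).2
    _ = p.roots.toFinset.card * ((2 ^ p.natDegree) ^ β * B) := by
        rw [Finset.sum_const, nsmul_eq_mul]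
    _ ≤ p.natDegree * ((2 ^ p.natDegree) ^ β * B) := by gcongr

lemma jb_norm_eval_cubic (a b c x : ℝ) :
    jb ‖(Cubic.toPoly ⟨1, (a : ℂ), b, c⟩).eval (x : ℂ)‖ = jb (x ^ 3 + a * x ^ 2 + b * x + c) := by
  rw [← jb_abs (x ^ 3 + _ + _ + _), ← Real.norm_eq_abs, ← Complex.norm_real]
  simp [Cubic.toPoly]

/-- If `β > 1/3`, there is a constant `C = C(β) > 0` such that for all real `a, b, c`,
`Σ_{n ∈ ℤ} ⟨n³ + an² + bn + c⟩^{−β} ≤ C`, uniformly in `a`, `b`, `c`. -/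
theorem sum_bracket_cubic (β : ℝ) (hβ : 1/3 < β) :
    ∃ C > 0, ∀ a b c : ℝ,
      Summable (fun n : ℤ => jb ((n : ℝ)^3 + a * (n : ℝ)^2 + b * (n : ℝ) + c) ^ (-β)) ∧
      (∑' n : ℤ, jb ((n : ℝ)^3 + a * (n : ℝ)^2 + b * (n : ℝ) + c) ^ (-β)) ≤ C := by
  obtain ⟨C, hC, hbound⟩ := sum_bracket_cubic_general (d := 3) (β := β) (by norm_num; linarith)
  exact ⟨C, hC, fun a b c => by
    simpa only [← jb_norm_eval_cubic, Complex.ofReal_intCast] using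
      hbound _ Cubic.monic_of_a_eq_one' (Cubic.natDegree_of_a_ne_zero' one_ne_zero)⟩
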